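/- Set x' := (1/2)(x ⊗ x + x ⊗ x³ + x³ ⊗ x − x³ ⊗ x³) and y' := y ⊗ y in the twisted tensor product algebra A ⊗̂ A. Then x'⁴ = 1 ⊗ 1, y'² = (1/2)((1 ⊗ 1) + ζx' + x'² − ζx'³), and x'y' = y'x'. Consequently there is a unique K-algebra homomorphism Δ : A → A ⊗̂ A with Δ(x) = x' and Δ(y) = y'. -/

import Mathlib

open MvPolynomial TensorProduct

/-- The defining ideal of the first example: generated by `x⁴ - 1` and
`y² - (1/2)(1 + ζx + x² - ζx³)`. -/
noncomputable def firstRelIdeal (K : Type*) [Field K] (ζ : K) :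
    Ideal (MvPolynomial (Fin 2) K) :=
  Ideal.span {X 0 ^ 4 - 1,
    X 1 ^ 2 - C ((2 : K)⁻¹) * (1 + C ζ * X 0 + X 0 ^ 2 - C ζ * X 0 ^ 3)}

/-- The first example: the commutative `K`-algebra generated by commuting elements `x`, `y`
subject to `x⁴ = 1` and `y² = (1/2)(1 + ζx + x² - ζx³)`. -/
abbrev FirstAlg (K : Type*) [Field K] (ζ : K) : Type _ :=
  MvPolynomial (Fin 2) K ⧸ firstRelIdeal K ζ

/-- The generator `x` of the first example. -/
noncomputable def xF (K : Type*) [Field K] (ζ : K) : FirstAlg K ζ :=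
  Ideal.Quotient.mk (firstRelIdeal K ζ) (X 0)

/-- The generator `y` of the first example. -/
noncomputable def yF (K : Type*) [Field K] (ζ : K) : FirstAlg K ζ :=
  Ideal.Quotient.mk (firstRelIdeal K ζ) (X 1)

/-- The group `G = ℤ/2 × ℤ/2`, written multiplicatively. -/
abbrev GG : Type := Multiplicative (ZMod 2 × ZMod 2)

/-- `g₁ = (0,0)`. -/
def g1 : GG := Multiplicative.ofAdd (0, 0)
/-- `g₂ = (1,0)`. -/
def g2 : GG := Multiplicative.ofAdd (1, 0)
/-- `g₃ = (0,1)`. -/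
def g3 : GG := Multiplicative.ofAdd (0, 1)
/-- `g₄ = (1,1)`. -/
def g4 : GG := Multiplicative.ofAdd (1, 1)

/-- The twisted multiplication of `A ⊗̂ A`:
`(a ⊗ b)(a' ⊗ b') = (1/4) ∑_{g,g'} θ(g,g') (a (g.a')) ⊗ ((g'.b) b')`,
extended bilinearly. -/
noncomputable def twMul {K : Type*} [Field K] {B : Type*} [Ring B] [Algebra K B]
    {G : Type*} [Monoid G] [Fintype G]
    (ρ : G →* (B →ₐ[K] B)) (θ : G → G → K)
    (z w : B ⊗[K] B) : B ⊗[K] B :=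
  (4 : K)⁻¹ • ∑ g : G, ∑ g' : G, θ g g' •
    (TensorProduct.map (LinearMap.mul' K B) (LinearMap.mul' K B))
      ((TensorProduct.tensorTensorTensorComm K B B B B)
        ((TensorProduct.map
            (TensorProduct.map LinearMap.id (ρ g').toLinearMap)
            (TensorProduct.map (ρ g).toLinearMap LinearMap.id))
          (z ⊗ₜ[K] w)))

section Twisted

variable {K : Type*} [Field K] {B : Type*} [CommRing B] [Algebra K B]

section General

variable {G : Type*} [CommGroup G] (ρ : G →* (B →ₐ[K] B))

/-- The action of a group element on the right tensor factor. -/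
noncomputable def rightAct (g : G) : B ⊗[K] B →ₐ[K] B ⊗[K] B :=
  Algebra.TensorProduct.map (AlgHom.id K B) (ρ g)

/-- The action of a group element on the left tensor factor. -/
noncomputable def leftAct (g : G) : B ⊗[K] B →ₐ[K] B ⊗[K] B :=
  Algebra.TensorProduct.map (ρ g) (AlgHom.id K B)

@[simp]
theorem rightAct_tmul (g : G) (a b : B) : rightAct ρ g (a ⊗ₜ[K] b) = a ⊗ₜ[K] ρ g b := rfl

@[simp]
theorem leftAct_tmul (g : G) (a b : B) : leftAct ρ g (a ⊗ₜ[K] b) = ρ g a ⊗ₜ[K] b := rfl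

theorem rightAct_rightAct (g h : G) (z : B ⊗[K] B) :
    rightAct ρ g (rightAct ρ h z) = rightAct ρ (g * h) z := by
  induction z with
  | zero => simp
  | tmul a b => simp
  | add z w hz hw => simp [hz, hw]

theorem leftAct_leftAct (g h : G) (z : B ⊗[K] B) :
    leftAct ρ g (leftAct ρ h z) = leftAct ρ (g * h) z := by
  induction z with
  | zero => simp
  | tmul a b => simp
  | add z w hz hw => simp [hz, hw]

theorem leftAct_rightAct (g h : G) (z : B ⊗[K] B) :
    leftAct ρ g (rightAct ρ h z) = rightAct ρ h (leftAct ρ g z) := by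
  induction z with
  | zero => simp
  | tmul a b => simp
  | add z w hz hw => simp [hz, hw]

theorem rightAct_one (z : B ⊗[K] B) : rightAct ρ 1 z = z := by
  induction z with
  | zero => simp
  | tmul a b => simp
  | add z w hz hw => simp [hz, hw]

theorem leftAct_one (z : B ⊗[K] B) : leftAct ρ 1 z = z := by
  induction z with
  | zero => simp
  | tmul a b => simp
  | add z w hz hw => simp [hz, hw]

variable [Fintype G] (θ : G → G → K)

theorem twMul_eq_sum (z w : B ⊗[K] B) :
    twMul ρ θ z w =
      (4 : K)⁻¹ • ∑ g : G, ∑ g' : G, θ g g' • (rightAct ρ g' z * leftAct ρ g w) := by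
  unfold twMul
  congr 1
  refine Finset.sum_congr rfl fun g _ => Finset.sum_congr rfl fun g' _ => ?_
  congr 1
  induction z with
  | zero => simp
  | add z₁ z₂ h₁ h₂ => simp only [add_tmul, map_add, h₁, h₂, add_mul]
  | tmul a b =>
    induction w with
    | zero => simp
    | add w₁ w₂ h₁ h₂ => simp only [tmul_add, map_add, h₁, h₂, mul_add]
    | tmul c d => simp

theorem twMul_add (z w v : B ⊗[K] B) :
    twMul ρ θ z (w + v) = twMul ρ θ z w + twMul ρ θ z v := by
  simp only [twMul_eq_sum, map_add, mul_add, smul_add, Finset.sum_add_distrib]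

theorem add_twMul (z w v : B ⊗[K] B) :
    twMul ρ θ (z + w) v = twMul ρ θ z v + twMul ρ θ w v := by
  simp only [twMul_eq_sum, map_add, add_mul, smul_add, Finset.sum_add_distrib]

theorem twMul_smul (r : K) (z w : B ⊗[K] B) :
    twMul ρ θ z (r • w) = r • twMul ρ θ z w := by
  simp only [twMul_eq_sum, map_smul, mul_smul_comm, Finset.smul_sum, smul_comm r]

theorem smul_twMul (r : K) (z w : B ⊗[K] B) :
    twMul ρ θ (r • z) w = r • twMul ρ θ z w := by
  simp only [twMul_eq_sum, map_smul, smul_mul_assoc, Finset.smul_sum, smul_comm r]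

/-- Left multiplication for the twisted product, as a linear map. -/
noncomputable def twMulLeft (z : B ⊗[K] B) : Module.End K (B ⊗[K] B) where
  toFun := twMul ρ θ z
  map_add' := twMul_add ρ θ z
  map_smul' r w := twMul_smul ρ θ r z w

@[simp]
theorem twMulLeft_apply (z w : B ⊗[K] B) : twMulLeft ρ θ z w = twMul ρ θ z w := rfl

theorem twMul_assoc (hθr : ∀ g h h' : G, θ g (h * h') = θ g h * θ g h')
    (hθl : ∀ g g' h : G, θ (g * g') h = θ g h * θ g' h) (z w v : B ⊗[K] B) :
    twMul ρ θ (twMul ρ θ z w) v = twMul ρ θ z (twMul ρ θ w v) := by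
  have lhs : twMul ρ θ (twMul ρ θ z w) v = ((4 : K)⁻¹ * (4 : K)⁻¹) •
      ∑ d : G, ∑ b : G, ∑ c : G, ∑ a : G, (θ d b * θ c a) •
        (rightAct ρ (b * a) z * rightAct ρ b (leftAct ρ c w) * leftAct ρ d v) := by
    simp only [twMul_eq_sum, map_smul, map_sum, map_mul, rightAct_rightAct, smul_mul_assoc,
      Finset.sum_mul, Finset.smul_sum, smul_smul]
    refine Finset.sum_congr rfl fun d _ => Finset.sum_congr rfl fun b _ =>
      Finset.sum_congr rfl fun c _ => Finset.sum_congr rfl fun a _ => ?_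
    congr 1
    ring
  have rhs : twMul ρ θ z (twMul ρ θ w v) = ((4 : K)⁻¹ * (4 : K)⁻¹) •
      ∑ c : G, ∑ a : G, ∑ d : G, ∑ b : G, (θ c a * θ d b) •
        (rightAct ρ a z * rightAct ρ b (leftAct ρ c w) * leftAct ρ (c * d) v) := by
    simp only [twMul_eq_sum, map_smul, map_sum, map_mul, leftAct_leftAct, leftAct_rightAct,
      mul_smul_comm, Finset.mul_sum, Finset.smul_sum, smul_smul]
    refine Finset.sum_congr rfl fun d _ => Finset.sum_congr rfl fun b _ =>
      Finset.sum_congr rfl fun c _ => Finset.sum_congr rfl fun a _ => ?_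
    rw [mul_assoc (rightAct ρ b z)]
    congr 1
    ring
  rw [lhs, rhs]
  congr 1
  calc
    _ = ∑ d : G, ∑ b : G, ∑ c : G, ∑ a : G, (θ d b * θ c (b⁻¹ * a)) •
        (rightAct ρ a z * rightAct ρ b (leftAct ρ c w) * leftAct ρ d v) := by
      refine Finset.sum_congr rfl fun d _ => Finset.sum_congr rfl fun b _ =>
        Finset.sum_congr rfl fun c _ => ?_
      refine Fintype.sum_equiv (Equiv.mulLeft b) _ _ fun a => ?_
      simp
    _ = ∑ c : G, ∑ a : G, ∑ b : G, ∑ d : G, (θ d b * θ c (b⁻¹ * a)) •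
        (rightAct ρ a z * rightAct ρ b (leftAct ρ c w) * leftAct ρ d v) := by
      rw [Finset.sum_comm_cycle]
      refine Finset.sum_congr rfl fun c _ => ?_
      rw [Finset.sum_comm_cycle]
      exact Finset.sum_congr rfl fun a _ => Finset.sum_comm
    _ = ∑ c : G, ∑ a : G, ∑ b : G, ∑ d : G, (θ c a * θ d b) •
        (rightAct ρ a z * rightAct ρ b (leftAct ρ c w) * leftAct ρ (c * d) v) := by
      refine Finset.sum_congr rfl fun c _ => Finset.sum_congr rfl fun a _ =>
        Finset.sum_congr rfl fun b _ => ?_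
      refine Fintype.sum_equiv (Equiv.mulLeft c⁻¹) _ _ fun d => ?_
      have h₁ : θ d b = θ c b * θ (c⁻¹ * d) b := by rw [← hθl]; simp
      have h₂ : θ c a = θ c b * θ c (b⁻¹ * a) := by rw [← hθr]; simp
      rw [Equiv.coe_mulLeft, mul_inv_cancel_left, h₁, h₂]
      congr 1
      ring
    _ = _ := Finset.sum_congr rfl fun c _ => Finset.sum_congr rfl fun a _ => Finset.sum_comm

end General

theorem sum_GG {M : Type*} [AddCommMonoid M] (f : GG → M) :
    ∑ g : GG, f g = f 1 + f g2 + f g3 + f (g2 * g3) := by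
  have h : (Finset.univ : Finset GG) = {1, g2, g3, g2 * g3} := by decide
  rw [h, Finset.sum_insert (by decide), Finset.sum_insert (by decide),
    Finset.sum_insert (by decide), Finset.sum_singleton]
  simp only [add_assoc]

theorem twMul_GG (ρ : GG →* (B →ₐ[K] B)) (θ : GG → GG → K) (s : K)
    (hθr : ∀ g h h' : GG, θ g (h * h') = θ g h * θ g h')
    (hθl : ∀ g g' h : GG, θ (g * g') h = θ g h * θ g' h)
    (hθ22 : θ g2 g2 = s) (hθ23 : θ g2 g3 = -1) (hθ32 : θ g3 g2 = -1) (hθ33 : θ g3 g3 = 1)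
    (z w : B ⊗[K] B) :
    twMul ρ θ z w = (4 : K)⁻¹ •
      (z * (w + leftAct ρ g2 w + leftAct ρ g3 w + leftAct ρ g2 (leftAct ρ g3 w)) +
        rightAct ρ g2 z *
          (w + s • leftAct ρ g2 w - leftAct ρ g3 w - s • leftAct ρ g2 (leftAct ρ g3 w)) +
        rightAct ρ g3 z *
          (w - leftAct ρ g2 w + leftAct ρ g3 w - leftAct ρ g2 (leftAct ρ g3 w)) +
        rightAct ρ g2 (rightAct ρ g3 z) *
          (w - s • leftAct ρ g2 w - leftAct ρ g3 w + s • leftAct ρ g2 (leftAct ρ g3 w))) := by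
  have h21 : θ g2 1 = 1 := by
    have h := hθr g2 1 g3
    rw [one_mul, hθ23] at h
    linear_combination h
  have h31 : θ g3 1 = 1 := by
    have h := hθr g3 1 g2
    rw [one_mul, hθ32] at h
    linear_combination h
  have h12 : θ 1 g2 = 1 := by
    have h := hθl 1 g3 g2
    rw [one_mul, hθ32] at h
    linear_combination h
  have h13 : θ 1 g3 = 1 := by
    have h := hθl 1 g2 g3
    rw [one_mul, hθ23] at h
    linear_combination h
  have h11 : θ 1 1 = 1 := by
    have h := hθl 1 g2 1
    rw [one_mul, h21] at h
    linear_combination -h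
  rw [twMul_eq_sum]
  congr 1
  simp only [sum_GG, hθr, hθl, h11, h12, h13, h21, h31, hθ22, hθ23, hθ32, hθ33,
    leftAct_one, rightAct_one, leftAct_leftAct, rightAct_rightAct, Algebra.smul_def, map_mul,
    map_one, map_neg]
  ring

theorem four_ne_zero_of_isPrimitiveRoot {ξ : K} (hξ : IsPrimitiveRoot ξ 8) : (4 : K) ≠ 0 := by
  intro h4
  have h2 : (2 : K) = 0 := by
    have : (2 : K) * 2 = 0 := by linear_combination h4
    simpa using this
  refine hξ.pow_ne_one_of_pos_of_lt (l := 4) (by norm_num) (by norm_num) ?_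
  have h : (ξ ^ 4 - 1) ^ 2 = 0 := by
    linear_combination hξ.pow_eq_one + (1 - ξ ^ 4) * h2
  exact sub_eq_zero.mp (pow_eq_zero_iff two_ne_zero |>.mp h)

theorem one_twMul_GG (h4 : (4 : K) ≠ 0) (ρ : GG →* (B →ₐ[K] B)) (θ : GG → GG → K) (s : K)
    (hθr : ∀ g h h' : GG, θ g (h * h') = θ g h * θ g h')
    (hθl : ∀ g g' h : GG, θ (g * g') h = θ g h * θ g' h)
    (hθ22 : θ g2 g2 = s) (hθ23 : θ g2 g3 = -1) (hθ32 : θ g3 g2 = -1) (hθ33 : θ g3 g3 = 1)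
    (w : B ⊗[K] B) : twMul ρ θ 1 w = w := by
  rw [twMul_GG ρ θ s hθr hθl hθ22 hθ23 hθ32 hθ33, inv_smul_eq_iff₀ h4]
  simp only [map_one, Algebra.smul_def, map_ofNat]
  ring

theorem twMul_one_GG (h4 : (4 : K) ≠ 0) (ρ : GG →* (B →ₐ[K] B)) (θ : GG → GG → K) (s : K)
    (hθr : ∀ g h h' : GG, θ g (h * h') = θ g h * θ g h')
    (hθl : ∀ g g' h : GG, θ (g * g') h = θ g h * θ g' h)
    (hθ22 : θ g2 g2 = s) (hθ23 : θ g2 g3 = -1) (hθ32 : θ g3 g2 = -1) (hθ33 : θ g3 g3 = 1)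
    (z : B ⊗[K] B) : twMul ρ θ z 1 = z := by
  rw [twMul_GG ρ θ s hθr hθl hθ22 hθ23 hθ32 hθ33, inv_smul_eq_iff₀ h4]
  simp only [map_one, Algebra.smul_def, map_ofNat]
  ring

/-- Where `g3` acts trivially, the twisted product is the ordinary one. -/
theorem twMul_eq_mul_GG (h4 : (4 : K) ≠ 0) (ρ : GG →* (B →ₐ[K] B)) (θ : GG → GG → K) (s : K)
    (hθr : ∀ g h h' : GG, θ g (h * h') = θ g h * θ g h')
    (hθl : ∀ g g' h : GG, θ (g * g') h = θ g h * θ g' h)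
    (hθ22 : θ g2 g2 = s) (hθ23 : θ g2 g3 = -1) (hθ32 : θ g3 g2 = -1) (hθ33 : θ g3 g3 = 1)
    {z w : B ⊗[K] B} (hz : rightAct ρ g3 z = z) (hw : leftAct ρ g3 w = w) :
    twMul ρ θ z w = z * w := by
  rw [twMul_GG ρ θ s hθr hθl hθ22 hθ23 hθ32 hθ33, inv_smul_eq_iff₀ h4, hz, hw]
  simp only [Algebra.smul_def, map_ofNat]
  ring

end Twisted

section FirstAlg

variable {K : Type*} [Field K] {ζ : K}

theorem xF_pow_four : xF K ζ ^ 4 = 1 := by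
  rw [xF, ← map_pow, ← map_one (Ideal.Quotient.mk _), Ideal.Quotient.eq]
  exact Ideal.subset_span (by simp)

theorem yF_sq : yF K ζ ^ 2 =
    algebraMap K _ 2⁻¹ *
      (1 + algebraMap K _ ζ * xF K ζ + xF K ζ ^ 2 - algebraMap K _ ζ * xF K ζ ^ 3) := by
  have h : Ideal.Quotient.mk (firstRelIdeal K ζ) (X 1 ^ 2) = Ideal.Quotient.mk (firstRelIdeal K ζ)
      (C ((2 : K)⁻¹) * (1 + C ζ * X 0 + X 0 ^ 2 - C ζ * X 0 ^ 3)) := by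
    rw [Ideal.Quotient.eq]
    exact Ideal.subset_span (by simp)
  simp only [map_mul, map_add, map_sub, map_pow, map_one] at h
  exact h

/-- Commuting elements satisfying the defining relations determine an algebra homomorphism. -/
theorem exists_algHom_firstAlg {S : Type*} [CommRing S] [Algebra K S] (u v : S) (hu : u ^ 4 = 1)
    (hv : v ^ 2 = (2 : K)⁻¹ • (1 + ζ • u + u ^ 2 - ζ • u ^ 3)) :
    ∃ f : FirstAlg K ζ →ₐ[K] S, f (xF K ζ) = u ∧ f (yF K ζ) = v := by
  have hI : ∀ p ∈ firstRelIdeal K ζ, aeval ![u, v] p = 0 := by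
    intro p hp
    refine (Ideal.span_le (I := RingHom.ker (aeval (R := K) ![u, v]))).mpr ?_ hp
    rintro q (rfl | rfl)
    · simp [RingHom.mem_ker, hu]
    · simp [RingHom.mem_ker, hv, Algebra.smul_def]
  refine ⟨Ideal.Quotient.liftₐ _ (aeval ![u, v]) hI, ?_, ?_⟩
  · exact (aeval_X _ _).trans rfl
  · exact (aeval_X _ _).trans rfl

theorem induction_firstAlg {p : FirstAlg K ζ → Prop} (one : p 1)
    (smul : ∀ (r : K) a, p a → p (r • a)) (add : ∀ a b, p a → p b → p (a + b))
    (mul_x : ∀ a, p a → p (a * xF K ζ)) (mul_y : ∀ a, p a → p (a * yF K ζ))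
    (a : FirstAlg K ζ) : p a := by
  obtain ⟨q, rfl⟩ := Ideal.Quotient.mk_surjective a
  induction q using MvPolynomial.induction_on with
  | C r =>
    have h : Ideal.Quotient.mk (firstRelIdeal K ζ) (C r) = r • (1 : FirstAlg K ζ) :=
      Algebra.algebraMap_eq_smul_one (A := FirstAlg K ζ) r
    exact h ▸ smul r 1 one
  | add q₁ q₂ h₁ h₂ => simpa using add _ _ h₁ h₂
  | mul_X q i h =>
    rw [map_mul]
    fin_cases i
    · exact mul_x _ h
    · exact mul_y _ h

end FirstAlg

section Identities

variable {R : Type*} [CommRing R] {a b z h : R}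

theorem comulX_sq (h2 : 2 * h = 1) (ha : a ^ 4 = 1) (hb : b ^ 4 = 1) :
    (h * (a * b + a * b ^ 3 + a ^ 3 * b - a ^ 3 * b ^ 3)) ^ 2 = a ^ 2 * b ^ 2 := by
  have h' : (a * b + a * b ^ 3 + a ^ 3 * b - a ^ 3 * b ^ 3) ^ 2 = 4 * (a ^ 2 * b ^ 2) := by grind
  linear_combination h ^ 2 * h' + a ^ 2 * b ^ 2 * (2 * h + 1) * h2

theorem comulY_sq_aux (ha : a ^ 4 = 1) (hb : b ^ 4 = 1) (hz : z ^ 4 = 1) :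
    (1 + z * a + a ^ 2 - z * a ^ 3) * (1 + z * b + b ^ 2 - z * b ^ 3) *
      ((1 + a ^ 3 + a ^ 2 + a) + b ^ 3 * (1 + z ^ 2 * a ^ 3 - a ^ 2 - z ^ 2 * a) +
        b ^ 2 * (1 - a ^ 3 + a ^ 2 - a) + b * (1 - z ^ 2 * a ^ 3 - a ^ 2 + z ^ 2 * a)) =
    8 * (1 + a ^ 2 * b ^ 2) +
      4 * z * (a * b + a * b ^ 3 + a ^ 3 * b - a ^ 3 * b ^ 3) * (1 - a ^ 2 * b ^ 2) := by
  grind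

theorem comulXY_aux (ha : a ^ 4 = 1) (hb : b ^ 4 = 1) :
    (a * b + a * b ^ 3 + a ^ 3 * b - a ^ 3 * b ^ 3) * (1 + a ^ 2) +
      (a * b ^ 3 + a * b + a ^ 3 * b ^ 3 - a ^ 3 * b) * (1 - a ^ 2) =
    (a * b + a * b ^ 3 + a ^ 3 * b - a ^ 3 * b ^ 3) * (1 + b ^ 2) +
      (a ^ 3 * b + a ^ 3 * b ^ 3 + a * b - a * b ^ 3) * (1 - b ^ 2) := by
  grind

end Identities

section Existence

variable {K : Type*} [Field K] {B : Type*} [CommRing B] [Algebra K B]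
  {G : Type*} [CommGroup G] [Fintype G] {ζ : K}

open scoped IsMulCommutative in
/-- Twisted-commuting elements satisfying the defining relations for the twisted product determine
a unital multiplicative linear map. -/
theorem exists_linearMap_twMul (ρ : G →* (B →ₐ[K] B)) (θ : G → G → K)
    (hassoc : ∀ z w v, twMul ρ θ (twMul ρ θ z w) v = twMul ρ θ z (twMul ρ θ w v))
    (hone : ∀ w, twMul ρ θ 1 w = w) (hmul_one : ∀ z, twMul ρ θ z 1 = z) (u v : B ⊗[K] B)
    (hu : twMul ρ θ (twMul ρ θ (twMul ρ θ u u) u) u = 1)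
    (hv : twMul ρ θ v v = (2 : K)⁻¹ •
      (1 + ζ • u + twMul ρ θ u u - ζ • twMul ρ θ (twMul ρ θ u u) u))
    (huv : twMul ρ θ u v = twMul ρ θ v u) :
    ∃ Δ : FirstAlg K ζ →ₗ[K] B ⊗[K] B, Δ 1 = 1 ∧
      (∀ a b, Δ (a * b) = twMul ρ θ (Δ a) (Δ b)) ∧ Δ (xF K ζ) = u ∧ Δ (yF K ζ) = v := by
  have hcomm : ∀ S ∈ ({twMulLeft ρ θ u, twMulLeft ρ θ v} : Set (Module.End K (B ⊗[K] B))),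
      ∀ T ∈ ({twMulLeft ρ θ u, twMulLeft ρ θ v} : Set (Module.End K (B ⊗[K] B))),
        S * T = T * S := by
    have h : twMulLeft ρ θ u * twMulLeft ρ θ v = twMulLeft ρ θ v * twMulLeft ρ θ u := by
      refine LinearMap.ext fun w => ?_
      simp [← hassoc, huv]
    rintro S (rfl | rfl) T (rfl | rfl)
    exacts [rfl, h, h.symm, rfl]
  have := Algebra.isMulCommutative_adjoin K hcomm
  let L := Algebra.adjoin K
    ({twMulLeft ρ θ u, twMulLeft ρ θ v} : Set (Module.End K (B ⊗[K] B)))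
  let U : L := ⟨twMulLeft ρ θ u, Algebra.subset_adjoin (by simp)⟩
  let V : L := ⟨twMulLeft ρ θ v, Algebra.subset_adjoin (by simp)⟩
  have hL : ∀ T ∈ L, ∀ w, T w = twMul ρ θ (T 1) w := by
    intro T hT
    induction hT using Algebra.adjoin_induction with
    | mem T hT =>
      rcases hT with rfl | rfl <;> simp [hmul_one]
    | algebraMap r =>
      intro w
      simp [Module.algebraMap_end_apply, smul_twMul, hone]
    | add S T _ _ hS hT =>
      intro w
      rw [LinearMap.add_apply, LinearMap.add_apply, add_twMul, ← hS, ← hT]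
    | mul S T _ _ hS hT =>
      intro w
      rw [Module.End.mul_apply, Module.End.mul_apply, hT w, hS, hS (T 1), hassoc]
  have hU : U ^ 4 = 1 := by
    refine Subtype.ext (LinearMap.ext fun w => ?_)
    change (twMulLeft ρ θ u ^ 4) w = w
    simp only [pow_succ, pow_zero, one_mul, Module.End.mul_apply, twMulLeft_apply]
    rw [← hassoc, ← hassoc, ← hassoc, hu, hone]
  have hV : V ^ 2 = (2 : K)⁻¹ • (1 + ζ • U + U ^ 2 - ζ • U ^ 3) := by
    refine Subtype.ext (LinearMap.ext fun w => ?_)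
    change (twMulLeft ρ θ v ^ 2) w = (2 : K)⁻¹ •
      (w + ζ • twMulLeft ρ θ u w + (twMulLeft ρ θ u ^ 2) w - ζ • (twMulLeft ρ θ u ^ 3) w)
    simp only [pow_succ, pow_zero, one_mul, Module.End.mul_apply, twMulLeft_apply]
    rw [← hassoc v v, hv, smul_twMul, sub_eq_add_neg, ← neg_smul, add_twMul, add_twMul, add_twMul,
      smul_twMul, smul_twMul, hone, ← hassoc u u, ← hassoc u (twMul ρ θ u u), ← hassoc u u, neg_smul,
      ← sub_eq_add_neg]
  obtain ⟨f, hfx, hfy⟩ := exists_algHom_firstAlg U V hU hV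
  refine ⟨LinearMap.applyₗ (1 : B ⊗[K] B) ∘ₗ L.val.toLinearMap ∘ₗ f.toLinearMap,
    ?_, fun a b => ?_, ?_, ?_⟩
  · simp
  · simp only [LinearMap.comp_apply, AlgHom.toLinearMap_apply, map_mul, LinearMap.applyₗ_apply_apply]
    exact hL _ (f a).2 _
  · simp [hfx, U, hmul_one]
  · simp [hfy, V, hmul_one]

end Existence

/-- The relations satisfied by the images of `x` and `y` in the twisted tensor product. -/
theorem twMul_relations {K : Type*} [Field K] {B : Type*} [CommRing B] [Algebra K B]
    (h4 : (4 : K) ≠ 0) {ζ : K} (hζ : ζ ^ 4 = 1) {x y : B} (hx4 : x ^ 4 = 1)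
    (hy2 : y ^ 2 =
      algebraMap K B 2⁻¹ * (1 + algebraMap K B ζ * x + x ^ 2 - algebraMap K B ζ * x ^ 3))
    (ρ : GG →* (B →ₐ[K] B)) (hρ2x : ρ g2 x = x ^ 3) (hρ2y : ρ g2 y = x ^ 3 * y)
    (hρ3x : ρ g3 x = x) (hρ3y : ρ g3 y = x ^ 2 * y) (θ : GG → GG → K)
    (hθr : ∀ g h h' : GG, θ g (h * h') = θ g h * θ g h')
    (hθl : ∀ g g' h : GG, θ (g * g') h = θ g h * θ g' h)
    (hθ22 : θ g2 g2 = ζ ^ 2) (hθ23 : θ g2 g3 = -1) (hθ32 : θ g3 g2 = -1) (hθ33 : θ g3 g3 = 1)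
    (x' y' : B ⊗[K] B)
    (hx' : x' = (2 : K)⁻¹ •
      (x ⊗ₜ[K] x + x ⊗ₜ[K] (x ^ 3) + (x ^ 3) ⊗ₜ[K] x - (x ^ 3) ⊗ₜ[K] (x ^ 3)))
    (hy' : y' = y ⊗ₜ[K] y) :
    twMul ρ θ (twMul ρ θ (twMul ρ θ x' x') x') x' = 1 ∧
    twMul ρ θ y' y' = (2 : K)⁻¹ • (1 + ζ • x' + twMul ρ θ x' x' -
      ζ • twMul ρ θ (twMul ρ θ x' x') x') ∧
    twMul ρ θ x' y' = twMul ρ θ y' x' := by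
  have h2 : (2 : K) ≠ 0 := fun h => h4 (by linear_combination 2 * h)
  set a := x ⊗ₜ[K] (1 : B) with ha
  set b := (1 : B) ⊗ₜ[K] x with hb
  set c := y ⊗ₜ[K] (1 : B) with hc
  set d := (1 : B) ⊗ₜ[K] y with hd
  set h : B ⊗[K] B := algebraMap K _ 2⁻¹ with hh
  set z : B ⊗[K] B := algebraMap K _ ζ with hz
  have hh2 : 2 * h = 1 := by
    rw [hh, ← map_ofNat (algebraMap K (B ⊗[K] B)) 2, ← map_mul,
      mul_inv_cancel₀ h2, map_one]
  have hz4 : z ^ 4 = 1 := by rw [hz, ← map_pow, hζ, map_one]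
  have ha4 : a ^ 4 = 1 := by
    rw [ha, Algebra.TensorProduct.tmul_pow, hx4, one_pow, Algebra.TensorProduct.one_def]
  have hb4 : b ^ 4 = 1 := by
    rw [hb, Algebra.TensorProduct.tmul_pow, hx4, one_pow, Algebra.TensorProduct.one_def]
  have hc2 : c ^ 2 = h * (1 + z * a + a ^ 2 - z * a ^ 3) := by
    have e := congrArg (Algebra.TensorProduct.includeLeft (R := K) (S := K) (A := B) (B := B)) hy2
    simp only [map_mul, map_add, map_sub, map_pow, map_one, AlgHom.commutes] at e
    exact e
  have hd2 : d ^ 2 = h * (1 + z * b + b ^ 2 - z * b ^ 3) := by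
    have e := congrArg (Algebra.TensorProduct.includeRight (R := K) (A := B) (B := B)) hy2
    simp only [map_mul, map_add, map_sub, map_pow, map_one, AlgHom.commutes] at e
    exact e
  have hxX : x' = h * (a * b + a * b ^ 3 + a ^ 3 * b - a ^ 3 * b ^ 3) := by
    rw [hx', Algebra.smul_def, ← hh]
    simp [ha, hb]
  have hyY : y' = c * d := by simp [hy', hc, hd]
  have hl2a : leftAct ρ g2 a = a ^ 3 := by simp [ha, hρ2x]
  have hl3a : leftAct ρ g3 a = a := by simp [ha, hρ3x]
  have hl2c : leftAct ρ g2 c = a ^ 3 * c := by simp [ha, hc, hρ2y]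
  have hl3c : leftAct ρ g3 c = a ^ 2 * c := by simp [ha, hc, hρ3y]
  have hlb (g : GG) : leftAct ρ g b = b := by simp [hb]
  have hld (g : GG) : leftAct ρ g d = d := by simp [hd]
  have hr2b : rightAct ρ g2 b = b ^ 3 := by simp [hb, hρ2x]
  have hr3b : rightAct ρ g3 b = b := by simp [hb, hρ3x]
  have hr2d : rightAct ρ g2 d = b ^ 3 * d := by simp [hb, hd, hρ2y]
  have hr3d : rightAct ρ g3 d = b ^ 2 * d := by simp [hb, hd, hρ3y]
  have hra (g : GG) : rightAct ρ g a = a := by simp [ha]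
  have hrc (g : GG) : rightAct ρ g c = c := by simp [hc]
  have ha9 : (a ^ 3) ^ 2 * (a ^ 3 * c) = a * c := by linear_combination (a ^ 4 + 1) * a * c * ha4
  have hb9 : (b ^ 3) ^ 2 * (b ^ 3 * d) = b * d := by linear_combination (b ^ 4 + 1) * b * d * hb4
  have ha33 : (a ^ 3) ^ 3 = a := by linear_combination (a ^ 4 + 1) * a * ha4
  have hb33 : (b ^ 3) ^ 3 = b := by linear_combination (b ^ 4 + 1) * b * hb4
  have hlh (g : GG) : leftAct ρ g h = h := AlgHom.commutes _ _
  have hrh (g : GG) : rightAct ρ g h = h := AlgHom.commutes _ _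
  have hlx : leftAct ρ g3 x' = x' := by simp [hxX, hlh, hl3a, hlb]
  have hrx : rightAct ρ g3 x' = x' := by simp [hxX, hrh, hr3b, hra]
  have hmul {p q : B ⊗[K] B} (hp : rightAct ρ g3 p = p)
      (hq : leftAct ρ g3 q = q) : twMul ρ θ p q = p * q :=
    twMul_eq_mul_GG h4 ρ θ _ hθr hθl hθ22 hθ23 hθ32 hθ33 hp hq
  have hxx : twMul ρ θ x' x' = x' ^ 2 := by rw [hmul hrx hlx, sq]
  have hxxx : twMul ρ θ (twMul ρ θ x' x') x' = x' ^ 3 := by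
    rw [hxx, hmul (by rw [map_pow, hrx]) hlx, ← pow_succ]
  have hx2 : x' ^ 2 = a ^ 2 * b ^ 2 := hxX ▸ comulX_sq hh2 ha4 hb4
  have hX4 : twMul ρ θ (twMul ρ θ (twMul ρ θ x' x') x') x' = 1 := by
    rw [hxxx, hmul (by rw [map_pow, hrx]) hlx, ← pow_succ]
    linear_combination (x' ^ 2 + a ^ 2 * b ^ 2) * hx2 + a ^ 4 * hb4 + ha4
  have hY2 : twMul ρ θ y' y' = (2 : K)⁻¹ • (1 + ζ • x' + twMul ρ θ x' x' -
      ζ • twMul ρ θ (twMul ρ θ x' x') x') := by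
    rw [hxxx, hxx, twMul_GG ρ θ _ hθr hθl hθ22 hθ23 hθ32 hθ33, inv_smul_eq_iff₀ h4, hyY]
    simp only [Algebra.smul_def, map_mul, map_pow, map_ofNat, hl2a, hl2c, hl3c, hld, hr2b, hr2d,
      hr3d, hrc, ← hh, ← hz, ha9, hb9]
    have key := comulY_sq_aux ha4 hb4 hz4
    set E := (1 + a ^ 3 + a ^ 2 + a) + b ^ 3 * (1 + z ^ 2 * a ^ 3 - a ^ 2 - z ^ 2 * a) +
      b ^ 2 * (1 - a ^ 3 + a ^ 2 - a) + b * (1 - z ^ 2 * a ^ 3 - a ^ 2 + z ^ 2 * a)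
    linear_combination d ^ 2 * E * hc2 + h * (1 + z * a + a ^ 2 - z * a ^ 3) * E * hd2 +
      h ^ 2 * key + 4 * h * (1 + a ^ 2 * b ^ 2) * hh2 - 4 * h * (1 - z * x') * hx2 -
      4 * h * z * (1 - a ^ 2 * b ^ 2) * hxX
  have hXY : twMul ρ θ x' y' = twMul ρ θ y' x' := by
    rw [twMul_GG ρ θ _ hθr hθl hθ22 hθ23 hθ32 hθ33, twMul_GG ρ θ _ hθr hθl hθ22 hθ23 hθ32 hθ33,
      hlx, hrx, hxX, hyY]
    congr 1
    simp only [Algebra.smul_def, map_mul, map_add, map_sub, map_pow, hl2a, hl2c, hl3c, hlb, hld,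
      hlh, hr2b, hr2d, hr3d, hra, hrc, hrh, ha9, hb9, ha33, hb33]
    linear_combination 2 * h * c * d * comulXY_aux ha4 hb4
  exact ⟨hX4, hY2, hXY⟩

theorem stmt_7 {K : Type*} [Field K] (ξ : K) (hξ : IsPrimitiveRoot ξ 8)
    (ζ : K) (hζ : ζ ^ 4 = 1)
    (ρ : GG →* (FirstAlg K ζ →ₐ[K] FirstAlg K ζ))
    (hρ2x : ρ g2 (xF K ζ) = xF K ζ ^ 3) (hρ2y : ρ g2 (yF K ζ) = xF K ζ ^ 3 * yF K ζ)
    (hρ3x : ρ g3 (xF K ζ) = xF K ζ) (hρ3y : ρ g3 (yF K ζ) = xF K ζ ^ 2 * yF K ζ)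
    (θ : GG → GG → K)
    (hθr : ∀ g h h' : GG, θ g (h * h') = θ g h * θ g h')
    (hθl : ∀ g g' h : GG, θ (g * g') h = θ g h * θ g' h)
    (hθ22 : θ g2 g2 = ζ ^ 2) (hθ23 : θ g2 g3 = -1)
    (hθ32 : θ g3 g2 = -1) (hθ33 : θ g3 g3 = 1)
    (x' y' : FirstAlg K ζ ⊗[K] FirstAlg K ζ)
    (hx' : x' = (2 : K)⁻¹ •
      ((xF K ζ) ⊗ₜ[K] (xF K ζ) + (xF K ζ) ⊗ₜ[K] (xF K ζ ^ 3) +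
        (xF K ζ ^ 3) ⊗ₜ[K] (xF K ζ) - (xF K ζ ^ 3) ⊗ₜ[K] (xF K ζ ^ 3)))
    (hy' : y' = (yF K ζ) ⊗ₜ[K] (yF K ζ)) :
    -- `x'⁴ = 1 ⊗ 1`
    twMul ρ θ (twMul ρ θ (twMul ρ θ x' x') x') x' =
        (1 : FirstAlg K ζ) ⊗ₜ[K] (1 : FirstAlg K ζ) ∧
    -- `y'² = (1/2)((1 ⊗ 1) + ζx' + x'² - ζx'³)`
    twMul ρ θ y' y' = (2 : K)⁻¹ •
      ((1 : FirstAlg K ζ) ⊗ₜ[K] (1 : FirstAlg K ζ) + ζ • x' + twMul ρ θ x' x'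
        - ζ • twMul ρ θ (twMul ρ θ x' x') x') ∧
    -- `x'y' = y'x'`
    twMul ρ θ x' y' = twMul ρ θ y' x' ∧
    -- there is a unique algebra homomorphism `Δ : A → A ⊗̂ A` with `Δ(x) = x'`, `Δ(y) = y'`
    (∃! Δ : FirstAlg K ζ →ₗ[K] FirstAlg K ζ ⊗[K] FirstAlg K ζ,
      Δ 1 = (1 : FirstAlg K ζ) ⊗ₜ[K] (1 : FirstAlg K ζ) ∧
      (∀ a b : FirstAlg K ζ, Δ (a * b) = twMul ρ θ (Δ a) (Δ b)) ∧
      Δ (xF K ζ) = x' ∧ Δ (yF K ζ) = y') := by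
  have h4 : (4 : K) ≠ 0 := four_ne_zero_of_isPrimitiveRoot hξ
  obtain ⟨hX4, hY2, hXY⟩ := twMul_relations h4 hζ xF_pow_four yF_sq ρ hρ2x hρ2y hρ3x hρ3y θ hθr hθl
    hθ22 hθ23 hθ32 hθ33 x' y' hx' hy'
  refine ⟨hX4, hY2, hXY, ?_⟩
  obtain ⟨Δ, h1, hΔ, hΔx, hΔy⟩ := exists_linearMap_twMul ρ θ (twMul_assoc ρ θ hθr hθl)
    (one_twMul_GG h4 ρ θ _ hθr hθl hθ22 hθ23 hθ32 hθ33)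
    (twMul_one_GG h4 ρ θ _ hθr hθl hθ22 hθ23 hθ32 hθ33) x' y' hX4 hY2 hXY
  refine ⟨Δ, ⟨h1, hΔ, hΔx, hΔy⟩, ?_⟩
  rintro Δ' ⟨h1', hΔ', hΔx', hΔy'⟩
  refine LinearMap.ext fun p => ?_
  induction p using induction_firstAlg with
  | one => exact h1'.trans h1.symm
  | smul r p hp => rw [map_smul, map_smul, hp]
  | add p q hp hq => rw [map_add, map_add, hp, hq]
  | mul_x p hp => rw [hΔ, hΔ', hp, hΔx', hΔx]
  | mul_y p hp => rw [hΔ, hΔ', hp, hΔy', hΔy]
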